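/- Let (R, m) be a 1-dimensional analytically unramified Noetherian local ring with conductor ideal 𝔠 and integral closure R̄. Then the following are equivalent: (i) Ext^i_R(𝔠, R) = 0 for some i > 0; (ii) R is Gorenstein; (iii) Ext^i_R(R̄, R) = 0 for all i > 0; (iv) Ext^i_R(R̄, R) = 0 for some i > 0. -/

import Mathlib

open CategoryTheory IsLocalRing

set_option synthInstance.maxHeartbeats 1000000
set_option maxHeartbeats 1000000

noncomputable section

/-- The integral closure `R̄` of `R` in its total ring of fractions, viewed as a type
(with its canonical `R`-algebra and `R`-module structures). -/
abbrev IntClosure (R : Type) [CommRing R] : Type :=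
  ↥(integralClosure R (FractionRing R))

/-- The quotient `R`-module `R̄/R`. -/
abbrev IntClosureQuot (R : Type) [CommRing R] : Type :=
  IntClosure R ⧸ LinearMap.range (Algebra.linearMap R (IntClosure R))

/-- The conductor ideal `𝔠 = Ann_R(R̄/R) = {r : R | r • R̄ ⊆ R}`. -/
def conductorIdeal (R : Type) [CommRing R] : Ideal R :=
  Module.annihilator R (IntClosureQuot R)

/-- A local ring `R` is analytically unramified if its `m`-adic completion is reduced. -/
def AnalyticallyUnramified (R : Type) [CommRing R] [IsLocalRing R] : Prop :=
  IsReduced (AdicCompletion (maximalIdeal R) R)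

/-- `R` is normal: it is reduced and equal to its integral closure `R̄` in its total
ring of fractions. -/
def IsNormalRing (R : Type) [CommRing R] : Prop :=
  IsReduced R ∧ integralClosure R (FractionRing R) = ⊥

/-- `Ext^i_R(M, N)` as a type. -/
abbrev ExtMod (R : Type) [CommRing R] (M : Type) [AddCommGroup M] [Module R M]
    (N : Type) [AddCommGroup N] [Module R N] (i : ℕ) : Type :=
  ↥(((Ext R (ModuleCat.{0} R) i).obj (Opposite.op (ModuleCat.of R M))).obj (ModuleCat.of R N))

/-- `M` has finite projective dimension over `R`:
`Ext^i_R(M, -)` vanishes for all `i` bigger than some `n`. -/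
def HasFiniteProjDim (R : Type) [CommRing R] (M : Type) [AddCommGroup M] [Module R M] : Prop :=
  ∃ n : ℕ, ∀ (N : ModuleCat.{0} R) (i : ℕ), n < i →
    Subsingleton ↥(((Ext R (ModuleCat.{0} R) i).obj (Opposite.op (ModuleCat.of R M))).obj N)

/-- `M` has finite injective dimension over `R`:
`Ext^i_R(-, M)` vanishes for all `i` bigger than some `n`. -/
def HasFiniteInjDim (R : Type) [CommRing R] (M : Type) [AddCommGroup M] [Module R M] : Prop :=
  ∃ n : ℕ, ∀ (N : ModuleCat.{0} R) (i : ℕ), n < i →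
    Subsingleton ↥(((Ext R (ModuleCat.{0} R) i).obj (Opposite.op N)).obj (ModuleCat.of R M))

/-- The depth of an `R`-module `M` over a local ring `(R, m)`: the least `i` such that
`Ext^i_R(R/m, M) ≠ 0` (`⊤` if there is no such `i`), valued in `WithBot (WithTop ℕ)`
for easy comparison with `ringKrullDim`. -/
def moduleDepth (R : Type) [CommRing R] [IsLocalRing R]
    (M : Type) [AddCommGroup M] [Module R M] : WithBot (WithTop ℕ) :=
  sInf { n : WithBot (WithTop ℕ) |
    ∃ i : ℕ, n = (i : ℕ) ∧ Nontrivial (ExtMod R (ResidueField R) M i) }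

/-- A Noetherian local ring is Gorenstein if it has finite injective dimension
as a module over itself. -/
def IsGorensteinLocal (R : Type) [CommRing R] [IsLocalRing R] : Prop :=
  IsNoetherianRing R ∧ HasFiniteInjDim R R

/-- A Noetherian local ring is Cohen–Macaulay if its depth equals its Krull dimension. -/
def IsCohenMacaulayLocal (R : Type) [CommRing R] [IsLocalRing R] : Prop :=
  IsNoetherianRing R ∧ moduleDepth R R = ringKrullDim R

/-- A ring is Cohen–Macaulay if it is Noetherian and all its localizations at primes
are Cohen–Macaulay local rings. -/
def IsCohenMacaulayRing (A : Type) [CommRing A] : Prop :=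
  IsNoetherianRing A ∧ ∀ (p : Ideal A) [p.IsPrime],
    moduleDepth (Localization.AtPrime p) (Localization.AtPrime p) =
      ringKrullDim (Localization.AtPrime p)

/-- Serre's condition `(S2)`: `depth (R_p) ≥ min {2, height p}` for every prime `p`
(`height p` being the dimension of `R_p`). -/
def SerreS2 (R : Type) [CommRing R] : Prop :=
  ∀ (p : Ideal R) [p.IsPrime],
    min 2 (ringKrullDim (Localization.AtPrime p)) ≤
      moduleDepth (Localization.AtPrime p) (Localization.AtPrime p)

/-- A Noetherian local ring is regular if its maximal ideal can be generated by
`dim R` elements. -/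
def IsRegularLocal (A : Type) [CommRing A] [IsLocalRing A] : Prop :=
  IsNoetherianRing A ∧ ∃ s : Finset A, Ideal.span (s : Set A) = maximalIdeal A ∧
    (s.card : WithBot (WithTop ℕ)) = ringKrullDim A

/-- Serre's condition `(R1)`: `R_p` is regular for every prime `p` of height at most `1`. -/
def SerreR1 (R : Type) [CommRing R] : Prop :=
  ∀ (p : Ideal R) [p.IsPrime], ringKrullDim (Localization.AtPrime p) ≤ 1 →
    IsRegularLocal (Localization.AtPrime p)

/-- The `i`-th local cohomology `H^i_m(M)` of `M` with support in the maximal ideal,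
as a type. -/
abbrev localCohMod (R : Type) [CommRing R] [IsLocalRing R] (i : ℕ)
    (M : Type) [AddCommGroup M] [Module R M] : Type :=
  ↥((localCohomology (maximalIdeal R) i).obj (ModuleCat.of R M))

/-- `x : Fin d → R` is a system of parameters for the local ring `(R, m)`:
`d = dim R`, all `x i` lie in `m`, and the ideal they generate is `m`-primary
(its radical is `m`). -/
def IsSystemOfParameters (R : Type) [CommRing R] [IsLocalRing R] {d : ℕ}
    (x : Fin d → R) : Prop :=
  (d : WithBot (WithTop ℕ)) = ringKrullDim R ∧ (∀ i, x i ∈ maximalIdeal R) ∧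
    (Ideal.span (Set.range x)).radical = maximalIdeal R

/-- `E` is an injective hull of the residue field of the local ring `R`:
`E` is injective and contains a copy of `R/m` as an essential submodule. -/
def IsInjectiveHullOfResidueField (R : Type) [CommRing R] [IsLocalRing R]
    (E : Type) [AddCommGroup E] [Module R E] : Prop :=
  Module.Injective R E ∧ ∃ f : ResidueField R →ₗ[R] E, Function.Injective f ∧
    ∀ N : Submodule R E, N ≠ ⊥ → N ⊓ LinearMap.range f ≠ ⊥

/-!
*Finiteness of `R̄`.* Let `x` be a regular nonunit. Each subring `R[s]` of `R̄`, with `s` finite,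
needs at most `ℓ(R/x)` generators as a module. If the integral closure of `(xⁿ)` were not contained
in `(x)` for large `n`, a Chevalley-type argument would produce from this uniform bound a nonzero
nilpotent element of the completion. Hence `R̄` is a finite `R`-module and the conductor contains a
regular element.

*The equivalence.* An ideal of `R` that is stable under `R̄` and contains a regular element is
principal over the semilocal ring `R̄`, so `𝔠 ≅ R̄ ≅ 𝔪ⁿ𝔠` for all `n`. If `Extⁱ(-, R)` vanishes on
them for one `i > 0`, then `Extⁱ⁺¹(R/𝔪ⁿ𝔠, R) = 0` for all `n`, and this forces a cosyzygy in a
minimal injective resolution of `R` to be torsion-free and divisible, hence injective because `R` is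
reduced. Conversely, finite injective dimension kills `Extʲ(-, R)`, `j ≥ 2`, on modules of finite
length, because the residue field embeds in `R/(x)`; apply this to `R/𝔠`.
-/

section Ext

universe w v u

open Abelian

variable {C : Type u} [Category.{v} C] [Abelian C] [HasExt.{w} C]

lemma subsingleton_ext_X₁ {S : ShortComplex C} (hS : S.ShortExact) {Y : C} {n : ℕ}
    (h₂ : Subsingleton (Ext S.X₂ Y n)) (h₃ : Subsingleton (Ext S.X₃ Y (n + 1))) :
    Subsingleton (Ext S.X₁ Y n) := by
  refine subsingleton_of_forall_eq 0 fun a ↦ ?_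
  obtain ⟨b, rfl⟩ :=
    Ext.contravariant_sequence_exact₁ hS Y a (add_comm 1 n) (Subsingleton.elim _ _)
  rw [Subsingleton.elim b 0, Ext.comp_zero]

lemma subsingleton_ext_X₂ {S : ShortComplex C} (hS : S.ShortExact) {Y : C} {n : ℕ}
    (h₁ : Subsingleton (Ext S.X₁ Y n)) (h₃ : Subsingleton (Ext S.X₃ Y n)) :
    Subsingleton (Ext S.X₂ Y n) := by
  refine subsingleton_of_forall_eq 0 fun a ↦ ?_
  obtain ⟨b, rfl⟩ := Ext.contravariant_sequence_exact₂ hS Y a (Subsingleton.elim _ _)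
  rw [Subsingleton.elim b 0, Ext.comp_zero]

lemma subsingleton_ext_X₃ {S : ShortComplex C} (hS : S.ShortExact) {Y : C} {n : ℕ}
    (h₁ : Subsingleton (Ext S.X₁ Y n)) (h₂ : Subsingleton (Ext S.X₂ Y (n + 1))) :
    Subsingleton (Ext S.X₃ Y (n + 1)) := by
  refine subsingleton_of_forall_eq 0 fun a ↦ ?_
  obtain ⟨b, rfl⟩ :=
    Ext.contravariant_sequence_exact₃ hS Y a (Subsingleton.elim _ _) (add_comm 1 n)
  rw [Subsingleton.elim b 0, Ext.comp_zero]

lemma subsingleton_ext_of_injective_X₂ {S : ShortComplex C} (hS : S.ShortExact)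
    [Injective S.X₂] {X : C} {n : ℕ} (h₁ : Subsingleton (Ext X S.X₁ (n + 2))) :
    Subsingleton (Ext X S.X₃ (n + 1)) := by
  refine subsingleton_of_forall_eq 0 fun a ↦ ?_
  obtain ⟨b, rfl⟩ := Ext.covariant_sequence_exact₃ X hS a rfl (Subsingleton.elim _ _)
  rw [Ext.eq_zero_of_injective b, Ext.zero_comp]

lemma exists_lift_of_subsingleton_ext_one {S : ShortComplex C} (hS : S.ShortExact) {X : C}
    (h : Subsingleton (Ext X S.X₁ 1)) (φ : X ⟶ S.X₃) : ∃ ψ : X ⟶ S.X₂, ψ ≫ S.g = φ := by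
  obtain ⟨b, hb⟩ := Ext.covariant_sequence_exact₃ X hS (Ext.mk₀ φ) rfl (Subsingleton.elim _ _)
  obtain ⟨ψ, rfl⟩ := Ext.homEquiv₀.symm.surjective b
  refine ⟨ψ, Ext.homEquiv₀.symm.injective ?_⟩
  simpa only [Ext.homEquiv₀_symm_apply, Ext.mk₀_comp_mk₀] using hb

lemma subsingleton_ext_congr {X X' : C} (e : X ≅ X') (Y : C) (n : ℕ) :
    Subsingleton (Ext X Y n) ↔ Subsingleton (Ext X' Y n) :=
  (((extFunctor n).mapIso e.symm.op).app Y).addCommGroupIsoToAddEquiv.subsingleton_congr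

end Ext

section ModuleExt

universe u

open Abelian

variable {R : Type u} [CommRing R]

lemma subsingleton_extFunctor_succ_iff (X Y : ModuleCat.{u} R) (n : ℕ) :
    Subsingleton (((_root_.Ext R (ModuleCat.{u} R) (n + 1)).obj (Opposite.op X)).obj Y) ↔
      Subsingleton (Abelian.Ext X Y (n + 1)) := by
  let P := ProjectiveResolution.of X
  have cocycle_iff : Subsingleton
      (((_root_.Ext R (ModuleCat.{u} R) (n + 1)).obj (Opposite.op X)).obj Y) ↔
      ∀ f : P.complex.X (n + 1) ⟶ Y, P.complex.d (n + 2) (n + 1) ≫ f = 0 →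
        ∃ g : P.complex.X n ⟶ Y, P.complex.d (n + 1) n ≫ g = f := by
    rw [← ModuleCat.isZero_iff_subsingleton, (P.isoExt (R := R) (n + 1) Y).isZero_iff,
      ← HomologicalComplex.exactAt_iff_isZero_homology,
      HomologicalComplex.exactAt_iff' _ n (n + 1) (n + 2) (by simp) (by simp),
      ShortComplex.moduleCat_exact_iff]
    rfl
  rw [cocycle_iff]
  refine ⟨fun h ↦ subsingleton_of_forall_eq 0 fun a ↦ ?_, fun _ f hf ↦ ?_⟩
  · obtain ⟨f, hf, rfl⟩ := P.extMk_surjective a (n + 2) rfl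
    exact (P.extMk_eq_zero_iff f (n + 2) rfl hf n rfl).2 (h f hf)
  · exact (P.extMk_eq_zero_iff f (n + 2) rfl hf n rfl).1 (Subsingleton.elim _ _)

/-- The vanishing of `Ext^n_R(M, N)`, in terms of `CategoryTheory.Abelian.Ext`, for which the long
exact sequences are available. -/
abbrev ExtVanishes (R : Type u) [CommRing R] (M N : Type u) [AddCommGroup M] [Module R M]
    [AddCommGroup N] [Module R N] (n : ℕ) : Prop :=
  Subsingleton (Abelian.Ext (ModuleCat.of R M) (ModuleCat.of R N) n)

lemma subsingleton_extMod_iff {R M N : Type} [CommRing R] [AddCommGroup M] [Module R M]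
    [AddCommGroup N] [Module R N] {n : ℕ} (hn : 0 < n) :
    Subsingleton (ExtMod R M N n) ↔ ExtVanishes R M N n := by
  obtain ⟨n, rfl⟩ := Nat.exists_eq_add_one.2 hn
  exact subsingleton_extFunctor_succ_iff _ _ n

variable {M M' N : Type u} [AddCommGroup M] [Module R M] [AddCommGroup M'] [Module R M']
  [AddCommGroup N] [Module R N]

lemma extVanishes_congr (e : M ≃ₗ[R] M') {n : ℕ} : ExtVanishes R M N n ↔ ExtVanishes R M' N n :=
  subsingleton_ext_congr e.toModuleIso _ n

lemma extVanishes_of_projective [Module.Projective R M] (n : ℕ) : ExtVanishes R M N (n + 1) :=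
  have := (IsProjective.iff_projective (R := R) M).1 inferInstance
  Ext.subsingleton_of_projective _ _ n

/-- The short complex `M → N → N / f(M)`. -/
abbrev cokernelShortComplex (f : M →ₗ[R] N) : ShortComplex (ModuleCat.{u} R) :=
  ShortComplex.moduleCatMk f f.range.mkQ f.range_mkQ_comp

lemma shortExact_cokernelShortComplex {f : M →ₗ[R] N} (hf : Function.Injective f) :
    (cokernelShortComplex f).ShortExact :=
  ModuleCat.shortComplex_shortExact _ f.exact_map_mkQ_range hf (Submodule.mkQ_surjective _)

/-- The short complex `P → M → M / P` of a submodule `P` of `M`. -/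
abbrev quotientShortComplex (P : Submodule R M) : ShortComplex (ModuleCat.{u} R) :=
  ShortComplex.moduleCatMk P.subtype P.mkQ (LinearMap.exact_subtype_mkQ P).linearMap_comp_eq_zero

lemma shortExact_quotientShortComplex (P : Submodule R M) :
    (quotientShortComplex P).ShortExact :=
  ModuleCat.shortComplex_shortExact _ (LinearMap.exact_subtype_mkQ P) P.injective_subtype
    P.mkQ_surjective

lemma extVanishes_ideal_iff (I : Ideal R) {n : ℕ} :
    ExtVanishes R I N (n + 1) ↔ ExtVanishes R (R ⧸ I) N (n + 2) :=
  ⟨fun h ↦ subsingleton_ext_X₃ (shortExact_quotientShortComplex I) h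
      (extVanishes_of_projective (M := R) (n + 1)),
    fun h ↦ subsingleton_ext_X₁ (shortExact_quotientShortComplex I)
      (extVanishes_of_projective (M := R) n) h⟩

lemma exists_mkQ_comp_eq_of_extVanishes_one {f : M →ₗ[R] N} (hf : Function.Injective f)
    (h : ExtVanishes R M' M 1) (φ : M' →ₗ[R] N ⧸ f.range) :
    ∃ ψ : M' →ₗ[R] N, f.range.mkQ ∘ₗ ψ = φ := by
  obtain ⟨ψ, hψ⟩ := exists_lift_of_subsingleton_ext_one (shortExact_cokernelShortComplex hf) h
    (ModuleCat.ofHom φ)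
  exact ⟨ψ.hom, congrArg ModuleCat.Hom.hom hψ⟩

end ModuleExt

section InjectiveHull

universe u v

variable {R : Type u} [Ring R] {I J : Type v} [AddCommGroup I] [Module R I]
  [AddCommGroup J] [Module R J]

/-- The submodule `N` is an essential extension of its submodule `D`, in its elementwise form:
every nonzero element of `N` has a nonzero multiple in `D`. -/
def IsEssentialIn (D N : Submodule R I) : Prop :=
  D ≤ N ∧ ∀ y ∈ N, y ≠ 0 → ∃ r : R, r • y ≠ 0 ∧ r • y ∈ D

namespace IsEssentialIn

variable {D N P : Submodule R I}

lemma refl (D : Submodule R I) : IsEssentialIn D D :=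
  ⟨le_rfl, fun y hy hy0 ↦ ⟨1, by rwa [one_smul], by rwa [one_smul]⟩⟩

lemma trans (hDN : IsEssentialIn D N) (hNP : IsEssentialIn N P) : IsEssentialIn D P := by
  refine ⟨hDN.1.trans hNP.1, fun y hy hy0 ↦ ?_⟩
  obtain ⟨r, hr0, hrN⟩ := hNP.2 y hy hy0
  obtain ⟨s, hs0, hsD⟩ := hDN.2 _ hrN hr0
  exact ⟨s * r, by rwa [mul_smul], by rwa [mul_smul]⟩

lemma disjoint_ker (h : IsEssentialIn D N) {g : I →ₗ[R] J} (hg : Disjoint D g.ker) :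
    Disjoint N g.ker := by
  rw [Submodule.disjoint_def] at hg ⊢
  intro y hyN hy
  by_contra hy0
  obtain ⟨r, hr0, hrD⟩ := h.2 y hyN hy0
  exact hr0 (hg _ hrD (g.ker.smul_mem r hy))

lemma map (h : IsEssentialIn D N) {g : I →ₗ[R] J} (hg : Function.Injective g) :
    IsEssentialIn (D.map g) (N.map g) := by
  refine ⟨Submodule.map_mono h.1, ?_⟩
  rintro _ ⟨y, hyN, rfl⟩ hy0
  obtain ⟨r, hr0, hrD⟩ := h.2 y hyN (by rintro rfl; exact hy0 g.map_zero)
  refine ⟨r, ?_, r • y, hrD, g.map_smul r y⟩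
  rwa [← map_smul, Ne, map_eq_zero_iff g hg]

lemma sSup {c : Set (Submodule R I)} (hne : c.Nonempty) (hc : IsChain (· ≤ ·) c)
    (h : ∀ N ∈ c, IsEssentialIn D N) : IsEssentialIn D (sSup c) := by
  obtain ⟨N, hN⟩ := hne
  refine ⟨(h N hN).1.trans (le_sSup hN), fun y hy ↦ ?_⟩
  obtain ⟨P, hP, hyP⟩ := (Submodule.mem_sSup_of_directed ⟨N, hN⟩ hc.directedOn).1 hy
  exact (h P hP).2 y hyP

end IsEssentialIn

lemma exists_maximal_isEssentialIn (D : Submodule R I) :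
    ∃ N : Submodule R I, Maximal (IsEssentialIn D) N := by
  obtain ⟨N, -, hN⟩ := zorn_le_nonempty₀ {N | IsEssentialIn D N}
    (fun c hc hchain N hN ↦ ⟨sSup c, .sSup ⟨N, hN⟩ hchain hc, fun P hP ↦ le_sSup hP⟩)
    D (.refl D)
  exact ⟨N, hN⟩

lemma exists_maximal_disjoint (N : Submodule R I) :
    ∃ Q : Submodule R I, Maximal (Disjoint N) Q := by
  obtain ⟨Q, -, hQ⟩ := zorn_le_nonempty₀ {Q | Disjoint N Q}
    (fun c hc hchain Q _ ↦ ⟨sSup c,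
      hchain.directedOn.disjoint_sSup_right.2 fun P hP ↦ hc hP, fun P hP ↦ le_sSup hP⟩)
    ⊥ disjoint_bot_right
  exact ⟨Q, hQ⟩

lemma isEssentialIn_map_mkQ_top {N Q : Submodule R I} (hQ : Maximal (Disjoint N) Q) :
    IsEssentialIn (N.map Q.mkQ) ⊤ := by
  refine ⟨le_top, fun y _ hy0 ↦ ?_⟩
  obtain ⟨v, rfl⟩ := Q.mkQ_surjective y
  have hvQ : v ∉ Q := fun hv ↦ hy0 ((Submodule.Quotient.mk_eq_zero Q).2 hv)
  have hnd : ¬ Disjoint N (Q ⊔ R ∙ v) := fun hd ↦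
    hvQ (hQ.le_of_ge hd le_sup_left (Submodule.mem_sup_right (Submodule.mem_span_singleton_self v)))
  rw [Submodule.disjoint_def] at hnd
  push Not at hnd
  obtain ⟨w, hwN, hw, hw0⟩ := hnd
  obtain ⟨q, hq, _, hrv, rfl⟩ := Submodule.mem_sup.1 hw
  obtain ⟨r, rfl⟩ := Submodule.mem_span_singleton.1 hrv
  have hq0 : Q.mkQ q = 0 := (Submodule.Quotient.mk_eq_zero Q).2 hq
  have hmk : Q.mkQ (q + r • v) = r • Q.mkQ v := by
    rw [map_add, map_smul, hq0, zero_add]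
  refine ⟨r, fun h0 ↦ hw0 ?_, hmk ▸ Submodule.mem_map_of_mem hwN⟩
  rw [← hmk] at h0
  exact Submodule.disjoint_def.1 hQ.prop _ hwN ((Submodule.Quotient.mk_eq_zero Q).1 h0)

-- A maximal essential extension `N` in `I` is a retract: with `Q` a maximal complement, the
-- inclusion of `N` extends along `N → I / Q` to a map that embeds `I / Q` in `I` as an essential
-- extension of `N`, that is, onto `N`.
lemma exists_isEssentialIn_isProj (hI : Module.Injective R I) (D : Submodule R I) :
    ∃ (N : Submodule R I) (ρ : I →ₗ[R] I), IsEssentialIn D N ∧ LinearMap.IsProj N ρ := by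
  obtain ⟨N, hN⟩ := exists_maximal_isEssentialIn D
  obtain ⟨Q, hQ⟩ := exists_maximal_disjoint N
  have hinj : Function.Injective (Q.mkQ ∘ₗ N.subtype) := by
    rw [← LinearMap.ker_eq_bot, LinearMap.ker_comp, Submodule.ker_mkQ,
      ← Submodule.disjoint_iff_comap_eq_bot]
    exact hQ.prop
  obtain ⟨h, hh⟩ := hI.out _ hinj N.subtype
  have hretract : ∀ v ∈ N, h (Q.mkQ v) = v := fun v hv ↦ hh ⟨v, hv⟩
  have hess := isEssentialIn_map_mkQ_top hQ
  have hker : Function.Injective h := by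
    rw [← LinearMap.ker_eq_bot, ← top_disjoint]
    refine hess.disjoint_ker (Submodule.disjoint_def.2 ?_)
    rintro _ ⟨v, hv, rfl⟩ h0
    rw [← hretract v hv, LinearMap.mem_ker.1 h0, map_zero]
  have hmap : (N.map Q.mkQ).map h = N := by
    ext v
    simp only [Submodule.mem_map, exists_exists_and_eq_and]
    exact ⟨fun ⟨w, hw, hwv⟩ ↦ hwv ▸ (hretract w hw).symm ▸ hw, fun hv ↦ ⟨v, hv, hretract v hv⟩⟩
  have hrange : IsEssentialIn N h.range := by
    simpa only [hmap, LinearMap.range_eq_map] using hess.map hker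
  exact ⟨N, h ∘ₗ Q.mkQ, hN.prop,
    ⟨fun v ↦ hN.le_of_ge (hN.prop.trans hrange) hrange.1 ⟨Q.mkQ v, rfl⟩, hretract⟩⟩

lemma injective_of_isProj (hI : Module.Injective R I) {N : Submodule R I} {ρ : I →ₗ[R] I}
    (hρ : LinearMap.IsProj N ρ) : Module.Injective R N where
  out X Y _ _ _ _ i hi g := by
    obtain ⟨h, hh⟩ := hI.out i hi (N.subtype ∘ₗ g)
    refine ⟨hρ.codRestrict ∘ₗ h, fun x ↦ ?_⟩
    rw [LinearMap.comp_apply, hh]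
    exact hρ.codRestrict_apply_cod (g x)

theorem exists_injectiveHull (R : Type u) [Ring R] (M : Type u) [AddCommGroup M] [Module R M] :
    ∃ (E : ModuleCat.{u} R) (f : M →ₗ[R] E), Function.Injective f ∧ Module.Injective R E ∧
      IsEssentialIn f.range ⊤ := by
  obtain ⟨I, hI, f, hf⟩ := EnoughInjectives.presentation (ModuleCat.of R M)
  obtain ⟨N, ρ, hN, hρ⟩ := exists_isEssentialIn_isProj
    (Module.injective_module_of_injective_object R I) f.hom.range
  have hfN (d : M) : f.hom d ∈ N := hN.1 ⟨d, rfl⟩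
  refine ⟨ModuleCat.of R N, f.hom.codRestrict N hfN, fun a b hab ↦
    (ModuleCat.mono_iff_injective f).1 hf (congrArg Subtype.val hab),
    injective_of_isProj (Module.injective_module_of_injective_object R I) hρ, le_top,
    fun e _ he ↦ ?_⟩
  obtain ⟨r, hr0, d, hd⟩ := hN.2 e e.2 (fun h ↦ he (Subtype.ext h))
  exact ⟨r, fun h ↦ hr0 (congrArg Subtype.val h), d, Subtype.ext hd⟩

end InjectiveHull

section NonZeroDivisors

open nonZeroDivisors

universe u v

variable {R : Type u} [CommRing R]

lemma exists_mem_nonZeroDivisors_of_annihilator_eq_bot [IsNoetherianRing R] {I : Ideal R}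
    (h : Module.annihilator R I = ⊥) : ∃ y ∈ I, y ∈ R⁰ := by
  by_contra! hI
  exact (Ideal.bot_lt_annihilator_of_disjoint_nonZeroDivisors
    (Set.disjoint_left.2 fun a ha ↦ hI a ha)).ne' h

lemma annihilator_sup_annihilator_eq_bot [IsReduced R] (I : Ideal R) :
    Module.annihilator R ↥(I ⊔ Module.annihilator R I) = ⊥ := by
  refine eq_bot_iff.2 fun z hz ↦ ?_
  have hmul (a : R) (ha : a ∈ I ⊔ Module.annihilator R I) : z * a = 0 :=
    congrArg Subtype.val (Module.mem_annihilator.1 hz ⟨a, ha⟩)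
  have hzI : z ∈ Module.annihilator R I :=
    Module.mem_annihilator.2 fun a ↦ Subtype.ext (hmul a (Ideal.mem_sup_left a.2))
  exact IsReduced.eq_zero z ⟨2, by rw [pow_two, hmul z (Ideal.mem_sup_right hzI)]⟩

lemma exists_mem_maximalIdeal_mem_nonZeroDivisors [IsLocalRing R] [IsNoetherianRing R]
    [IsReduced R] (hR : ¬ IsField R) : ∃ x ∈ maximalIdeal R, x ∈ R⁰ := by
  refine exists_mem_nonZeroDivisors_of_annihilator_eq_bot (eq_bot_iff.2 fun z hz ↦ ?_)
  have hmul (a : R) (ha : a ∈ maximalIdeal R) : z * a = 0 :=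
    congrArg Subtype.val (Module.mem_annihilator.1 hz ⟨a, ha⟩)
  by_cases hzm : z ∈ maximalIdeal R
  · exact IsReduced.eq_zero z ⟨2, by rw [pow_two, hmul z hzm]⟩
  · have hu : IsUnit z := IsLocalRing.notMem_maximalIdeal.1 hzm
    exact absurd (isField_iff_maximalIdeal_eq.2 (eq_bot_iff.2 fun a ha ↦
      hu.mul_right_eq_zero.1 (hmul a ha))) hR

-- If `a ∈ I`, `b I = 0` and `z = a + b` is regular, then `g : I → M` is multiplication by
-- `z⁻¹ g(a)`, because `z r = r a` for `r ∈ I`.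
lemma injective_of_bijective_smul [IsNoetherianRing R] [IsReduced R] {M : Type v}
    [AddCommGroup M] [Module R M]
    (h : ∀ z ∈ R⁰, Function.Bijective (z • · : M → M)) : Module.Injective R M := by
  refine Module.Baer.injective fun I g ↦ ?_
  obtain ⟨z, hz, hreg⟩ := exists_mem_nonZeroDivisors_of_annihilator_eq_bot
    (annihilator_sup_annihilator_eq_bot I)
  obtain ⟨a, ha, b, hb, rfl⟩ := Submodule.mem_sup.1 hz
  obtain ⟨m, hm⟩ := (h _ hreg).2 (g ⟨a, ha⟩)
  refine ⟨LinearMap.toSpanSingleton R M m, fun r hr ↦ (h _ hreg).1 ?_⟩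
  have hbr : b * r = 0 := congrArg Subtype.val (Module.mem_annihilator.1 hb ⟨r, hr⟩)
  have hra : r • (⟨a, ha⟩ : I) = (a + b) • ⟨r, hr⟩ := Subtype.ext <|
    show r * a = (a + b) * r by rw [add_mul, hbr, add_zero, mul_comm]
  calc (a + b) • r • m = r • (a + b) • m := smul_comm _ _ _
    _ = r • g ⟨a, ha⟩ := congrArg _ hm
    _ = (a + b) • g ⟨r, hr⟩ := by rw [← map_smul, hra, map_smul]

lemma surjective_smul_of_injective {E : Type u} [AddCommGroup E] [Module R E]
    (hE : Module.Injective R E) {z : R} (hz : z ∈ R⁰) : Function.Surjective (z • · : E → E) := by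
  intro e
  obtain ⟨g, hg⟩ := hE.out (LinearMap.toSpanSingleton R R z)
    (fun a b hab ↦ (mul_cancel_right_mem_nonZeroDivisors hz).1 hab)
    (LinearMap.toSpanSingleton R E e)
  refine ⟨g 1, ?_⟩
  simpa only [LinearMap.toSpanSingleton_apply, one_smul, ← map_smul, smul_eq_mul, mul_one,
    one_mul] using hg 1

lemma isFiniteLength_quotient_of_mem_nonZeroDivisors [IsNoetherianRing R]
    [Ring.KrullDimLE 1 R] {x : R} (hx : x ∈ R⁰) {I : Ideal R} (hxI : x ∈ I) :
    IsFiniteLength R (R ⧸ I) :=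
  (isFiniteLength_quotient_span_singleton R hx).of_surjective
    (Submodule.factor_surjective ((Ideal.span_singleton_le_iff_mem I).2 hxI))

variable [IsLocalRing R] [Ring.KrullDimLE 1 R] {x : R}

lemma eq_maximalIdeal_of_mem_nonZeroDivisors (hx : x ∈ R⁰) {p : Ideal R} (hp : p.IsPrime)
    (hxp : x ∈ p) : p = maximalIdeal R := by
  refine (Ring.krullDimLE_one_iff.1 ‹_› p hp).elim (fun hmin ↦ ?_) eq_maximalIdeal
  exact absurd hx (Set.disjoint_left.1
    (Ideal.disjoint_nonZeroDivisors_of_mem_minimalPrimes hmin) hxp)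

lemma exists_maximalIdeal_pow_le_span_singleton [IsNoetherianRing R] (hx : x ∈ R⁰) :
    ∃ N : ℕ, maximalIdeal R ^ N ≤ Ideal.span {x} := by
  refine Ideal.exists_pow_le_of_le_radical_of_fg ?_ (IsNoetherian.noetherian _)
  rw [Ideal.radical_eq_sInf]
  exact le_sInf fun p ⟨hle, hp⟩ ↦
    (eq_maximalIdeal_of_mem_nonZeroDivisors hx hp (hle (Ideal.mem_span_singleton_self x))).ge

lemma exists_injective_residueField_quotient_span_singleton [IsNoetherianRing R]
    (hxm : x ∈ maximalIdeal R) (hx : x ∈ R⁰) :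
    ∃ φ : (R ⧸ maximalIdeal R) →ₗ[R] R ⧸ Ideal.span {x}, Function.Injective φ := by
  have : Nontrivial (R ⧸ Ideal.span {x}) := Ideal.Quotient.nontrivial_iff.2
    fun h ↦ hxm (Ideal.span_singleton_eq_top.1 h)
  obtain ⟨p, hp⟩ := associatedPrimes.nonempty R (R ⧸ Ideal.span {x})
  have hxp : x ∈ p := hp.annihilator_le (by
    rw [Submodule.annihilator_top, Ideal.annihilator_quotient]
    exact Ideal.mem_span_singleton_self x)
  obtain ⟨hprime, φ, hφ⟩ := (isAssociatedPrime_iff_exists_injective_linearMap p _).1 hp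
  obtain rfl := eq_maximalIdeal_of_mem_nonZeroDivisors hx hprime hxp
  exact ⟨φ, hφ⟩

end NonZeroDivisors

section InjectiveDimension

open nonZeroDivisors Abelian

universe u

variable {R : Type u} [CommRing R] [IsLocalRing R]

section Essential

variable {D E : Type u} [AddCommGroup D] [Module R D] [AddCommGroup E] [Module R E]
  {f : D →ₗ[R] E}

-- A lift `e ∈ E` of `u` killed by `m J` has `J e` inside the socle of `E`, which lies in `D`.
lemma le_torsionOf_of_maximalIdeal_mul_le (hf : Function.Injective f)
    (hess : IsEssentialIn f.range ⊤) {J : Ideal R}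
    (h : ExtVanishes R (R ⧸ maximalIdeal R * J) D 1) {u : E ⧸ f.range}
    (hu : maximalIdeal R * J ≤ Ideal.torsionOf R _ u) : J ≤ Ideal.torsionOf R _ u := by
  obtain ⟨ψ, hψ⟩ := exists_mkQ_comp_eq_of_extVanishes_one hf h
    (Submodule.liftQ _ (LinearMap.toSpanSingleton R _ u) hu)
  let e : E := ψ (Submodule.Quotient.mk 1)
  have heu : f.range.mkQ e = u :=
    (LinearMap.congr_fun hψ (Submodule.Quotient.mk 1)).trans (one_smul R u)
  have hke (r : R) (hr : r ∈ maximalIdeal R * J) : r • e = 0 := by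
    rw [← map_smul, ← Submodule.Quotient.mk_smul, smul_eq_mul, mul_one,
      (Submodule.Quotient.mk_eq_zero _).2 hr, map_zero]
  intro r hr
  rw [Ideal.mem_torsionOf_iff, ← heu, ← map_smul, Submodule.mkQ_apply,
    Submodule.Quotient.mk_eq_zero]
  by_cases h0 : r • e = 0
  · exact h0 ▸ zero_mem _
  obtain ⟨s, hs0, hs⟩ := hess.2 _ Submodule.mem_top h0
  have hsu : IsUnit s := IsLocalRing.notMem_maximalIdeal.1 fun hsm ↦
    hs0 (by rw [smul_smul, hke _ (Ideal.mul_mem_mul hsm hr)])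
  exact (Submodule.smul_mem_iff_of_isUnit _ hsu).1 hs

lemma le_torsionOf_of_maximalIdeal_pow_mul_le (hf : Function.Injective f)
    (hess : IsEssentialIn f.range ⊤) {J : Ideal R}
    (h : ∀ n : ℕ, ExtVanishes R (R ⧸ maximalIdeal R ^ n * J) D 1) {u : E ⧸ f.range} {n : ℕ}
    (hu : maximalIdeal R ^ n * J ≤ Ideal.torsionOf R _ u) : J ≤ Ideal.torsionOf R _ u := by
  induction n with
  | zero => simpa only [pow_zero, one_mul] using hu
  | succ n ih =>
    have hn := h (n + 1)
    rw [pow_succ', mul_assoc] at hu hn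
    exact ih (le_torsionOf_of_maximalIdeal_mul_le hf hess hn hu)

end Essential

variable [IsNoetherianRing R] [Ring.KrullDimLE 1 R]

lemma bijective_smul_quotient_range {D E : Type u} [AddCommGroup D] [Module R D]
    [AddCommGroup E] [Module R E] (hE : Module.Injective R E) {f : D →ₗ[R] E}
    (hf : Function.Injective f) (hess : IsEssentialIn f.range ⊤) {J : Ideal R} {x : R}
    (hxJ : x ∈ J) (hx : x ∈ R⁰) (h : ∀ n : ℕ, ExtVanishes R (R ⧸ maximalIdeal R ^ n * J) D 1)
    {z : R} (hz : z ∈ R⁰) : Function.Bijective (z • · : E ⧸ f.range → E ⧸ f.range) := by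
  have hsurj (y : R) (hy : y ∈ R⁰) : Function.Surjective (y • · : E ⧸ f.range → E ⧸ f.range) := by
    intro u
    obtain ⟨e, rfl⟩ := f.range.mkQ_surjective u
    obtain ⟨e, rfl⟩ := surjective_smul_of_injective hE hy e
    exact ⟨f.range.mkQ e, (map_smul _ _ _).symm⟩
  refine ⟨(injective_iff_map_eq_zero (DistribSMul.toAddMonoidHom _ z)).2 fun u hu ↦ ?_,
    hsurj z hz⟩
  obtain ⟨v, rfl⟩ := hsurj (x * z) (mul_mem hx hz) u
  obtain ⟨N, hN⟩ := exists_maximalIdeal_pow_le_span_singleton (mul_mem hz (mul_mem hx hz))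
  have hv : maximalIdeal R ^ N * J ≤ Ideal.torsionOf R _ v := by
    refine (Ideal.mul_le_left.trans hN).trans ((Ideal.span_singleton_le_iff_mem _).2 ?_)
    rw [Ideal.mem_torsionOf_iff, mul_smul]
    exact hu
  exact le_torsionOf_of_maximalIdeal_pow_mul_le hf hess h hv (J.mul_mem_right z hxJ)

variable [IsReduced R]

theorem hasInjectiveDimensionLT_of_extVanishes {J : Ideal R} {x : R} (hxJ : x ∈ J) (hx : x ∈ R⁰)
    (i : ℕ) {D : Type u} [AddCommGroup D] [Module R D]
    (h : ∀ n : ℕ, ExtVanishes R (R ⧸ maximalIdeal R ^ n * J) D (i + 1)) :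
    HasInjectiveDimensionLT (ModuleCat.of R D) (i + 2) := by
  induction i generalizing D with
  | zero =>
    obtain ⟨E, f, hf, hE, hess⟩ := exists_injectiveHull R D
    have hinj : Module.Injective R (E ⧸ f.range) := injective_of_bijective_smul fun z hz ↦
      bijective_smul_quotient_range hE hf hess hxJ hx h hz
    have := Module.injective_object_of_injective_module R (E ⧸ f.range)
    exact ((shortExact_cokernelShortComplex hf).hasInjectiveDimensionLT_X₃_iff 0
      (Module.injective_object_of_injective_module R E)).1
      (inferInstanceAs (HasInjectiveDimensionLT (ModuleCat.of R (E ⧸ f.range)) 1))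
  | succ i ih =>
    obtain ⟨E, f, hf, hE, -⟩ := exists_injectiveHull R D
    have : Injective (cokernelShortComplex f).X₂ :=
      Module.injective_object_of_injective_module R E
    exact ((shortExact_cokernelShortComplex hf).hasInjectiveDimensionLT_X₃_iff (i + 1) this).1
      (ih fun n ↦ subsingleton_ext_of_injective_X₂ (shortExact_cokernelShortComplex hf) (h n))

end InjectiveDimension

section FiniteLength

open nonZeroDivisors Abelian

universe u

variable {R : Type u} [CommRing R] {N : Type u} [AddCommGroup N] [Module R N]

lemma extVanishes_quotient_span_singleton {x : R} (hx : x ∈ R⁰) (j : ℕ) :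
    ExtVanishes R (R ⧸ Ideal.span {x}) N (j + 2) := by
  have hinj : Function.Injective (LinearMap.toSpanSingleton R R x) :=
    fun a b hab ↦ (mul_cancel_right_mem_nonZeroDivisors hx).1 hab
  let e : R ≃ₗ[R] Ideal.span {x} := (LinearEquiv.ofInjective _ hinj).trans
    (LinearEquiv.ofEq _ _ (LinearMap.range_toSpanSingleton x))
  exact (extVanishes_ideal_iff _).1 ((extVanishes_congr e).1 (extVanishes_of_projective j))

variable [IsLocalRing R]

lemma extVanishes_of_isFiniteLength {n : ℕ} (hk : ExtVanishes R (R ⧸ maximalIdeal R) N n)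
    {L : Type u} [AddCommGroup L] [Module R L] (hL : IsFiniteLength R L) :
    ExtVanishes R L N n := by
  induction hL with
  | of_subsingleton =>
    refine subsingleton_of_forall_eq 0 fun a ↦ ?_
    rw [← Ext.mk₀_id_comp a, (ModuleCat.isZero_of_subsingleton _).eq_of_src (𝟙 _) 0,
      Ext.mk₀_zero, Ext.zero_comp]
  | @of_simple_quotient M _ _ P hsimple _ ih =>
    obtain ⟨I, hI, ⟨e⟩⟩ := isSimpleModule_iff_quot_maximal.1 hsimple
    obtain rfl := eq_maximalIdeal hI
    exact subsingleton_ext_X₂ (shortExact_quotientShortComplex P) ih ((extVanishes_congr e).2 hk)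

variable [IsNoetherianRing R] [Ring.KrullDimLE 1 R]

-- Descending induction on the degree: `R/m` embeds in `R/(x)`, on which `Ext^{≥ 2}` vanishes.
lemma extVanishes_residueField {x : R} (hxm : x ∈ maximalIdeal R) (hx : x ∈ R⁰) (k j : ℕ)
    (hN : HasInjectiveDimensionLT (ModuleCat.of R N) (j + 2 + k)) :
    ExtVanishes R (R ⧸ maximalIdeal R) N (j + 2) := by
  induction k generalizing j with
  | zero => exact HasInjectiveDimensionLT.subsingleton _ (j + 2) _ le_rfl _
  | succ k ih =>
    obtain ⟨φ, hφ⟩ := exists_injective_residueField_quotient_span_singleton hxm hx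
    have hcoker : IsFiniteLength R ((R ⧸ Ideal.span {x}) ⧸ φ.range) :=
      (isFiniteLength_quotient_span_singleton R hx).of_surjective φ.range.mkQ_surjective
    refine subsingleton_ext_X₁ (shortExact_cokernelShortComplex hφ)
      (extVanishes_quotient_span_singleton hx j)
      (extVanishes_of_isFiniteLength (ih (j + 1) ?_) hcoker)
    rwa [show j + 1 + 2 + k = j + 2 + (k + 1) by omega]

theorem extVanishes_ideal_of_hasInjectiveDimensionLT {x : R} (hxm : x ∈ maximalIdeal R)
    (hx : x ∈ R⁰) {n : ℕ} (hN : HasInjectiveDimensionLT (ModuleCat.of R N) n) {I : Ideal R}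
    {y : R} (hyI : y ∈ I) (hy : y ∈ R⁰) (i : ℕ) : ExtVanishes R I N (i + 1) :=
  (extVanishes_ideal_iff I).2 <| extVanishes_of_isFiniteLength
    (extVanishes_residueField hxm hx n i (hasInjectiveDimensionLT_of_ge _ n _ (by omega)))
    (isFiniteLength_quotient_of_mem_nonZeroDivisors hy hyI)

end FiniteLength

section Gorenstein

lemma hasFiniteInjDim_iff {R M : Type} [CommRing R] [AddCommGroup M] [Module R M] :
    HasFiniteInjDim R M ↔ ∃ n, HasInjectiveDimensionLT (ModuleCat.of R M) n := by
  refine ⟨fun ⟨n, h⟩ ↦ ⟨n + 1, ?_⟩, fun ⟨n, h⟩ ↦ ⟨n, fun N i hi ↦ ?_⟩⟩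
  · refine .mk fun i hi N e ↦ ?_
    obtain ⟨i, rfl⟩ := Nat.exists_eq_add_one.2 (Nat.zero_lt_of_lt hi)
    have := (subsingleton_extFunctor_succ_iff N (ModuleCat.of R M) i).1 (h N (i + 1) hi)
    exact Subsingleton.elim _ _
  · obtain ⟨i, rfl⟩ := Nat.exists_eq_add_one.2 (Nat.zero_lt_of_lt hi)
    exact (subsingleton_extFunctor_succ_iff N (ModuleCat.of R M) i).2
      (HasInjectiveDimensionLT.subsingleton _ n _ hi.le _)

end Gorenstein

section Length

universe u

variable {R : Type u} [CommRing R] {N M P : Type*} [AddCommGroup N] [Module R N]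
  [AddCommGroup M] [Module R M] [AddCommGroup P] [Module R P]

lemma length_quotient_range_comp (f : N →ₗ[R] M) {g : M →ₗ[R] P} (hg : Function.Injective g) :
    Module.length R (P ⧸ (g ∘ₗ f).range) =
      Module.length R (M ⧸ f.range) + Module.length R (P ⧸ g.range) := by
  have hle : (g ∘ₗ f).range ≤ g.range := LinearMap.range_comp_le_range f g
  have hcomap : f.range = (g ∘ₗ f).range.comap g := by
    rw [LinearMap.range_comp, Submodule.comap_map_eq_of_injective hg]
  refine Module.length_eq_add_of_exact (f.range.mapQ _ g hcomap.le) (Submodule.factor hle) ?_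
    (Submodule.factor_surjective hle) fun q ↦ ?_
  · rw [← LinearMap.ker_eq_bot, Submodule.ker_mapQ, ← hcomap, Submodule.mkQ_map_self]
  · obtain ⟨p, rfl⟩ := Submodule.mkQ_surjective _ q
    rw [← LinearMap.coe_range, Submodule.range_mapQ, SetLike.mem_coe, ← Submodule.mem_comap,
      Submodule.comap_map_mkQ, sup_eq_right.2 hle, Submodule.factor_mk, Submodule.mkQ_apply,
      Submodule.Quotient.mk_eq_zero]

lemma length_quotient_range_eq_of_comp_eq {f : N →ₗ[R] M} (hf : Function.Injective f)
    (hM : IsFiniteLength R (M ⧸ f.range)) {α : N →ₗ[R] N} {φ : M →ₗ[R] M}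
    (hφ : Function.Injective φ) (h : φ ∘ₗ f = f ∘ₗ α) :
    Module.length R (M ⧸ φ.range) = Module.length R (N ⧸ α.range) := by
  have hlen := length_quotient_range_comp f hφ
  rw [h, length_quotient_range_comp α hf, add_comm] at hlen
  exact (WithTop.add_left_cancel (Module.length_ne_top_iff.2 hM) hlen).symm

lemma spanFinrank_top_le_length_quotient [IsLocalRing R] {N : Submodule R M} (hN : N.FG)
    {Q : Submodule R N} (hQ : Q ≤ maximalIdeal R • ⊤) :
    ((⊤ : Submodule R N).spanFinrank : ℕ∞) ≤ Module.length R (N ⧸ Q) := by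
  have : Module.Finite R N := Module.Finite.iff_fg.2 hN
  let : Field (R ⧸ maximalIdeal R) := Ideal.Quotient.field _
  rw [N.spanFinrank_top, IsLocalRing.spanFinrank_eq_finrank_quotient N hN,
    ← Module.length_eq_finrank,
    ← Module.length_eq_of_surjective (Ideal.Quotient.mk_surjective (I := maximalIdeal R))]
  exact Module.length_le_of_surjective _ (Submodule.factor_surjective hQ)

end Length

section UniformBound

open nonZeroDivisors

universe u

variable {R : Type u} [CommRing R]

lemma pow_spanFinrank_mem {M : Type*} [AddCommGroup M] [Module R M] [FaithfulSMul R M]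
    [Module.Finite R M] {r : R} {I : Ideal R} (h : ∀ m : M, r • m ∈ I • (⊤ : Submodule R M)) :
    r ^ (⊤ : Submodule R M).spanFinrank ∈ I := by
  obtain ⟨p, hmonic, hdeg, hcoeff, hp⟩ :=
    LinearMap.exists_monic_and_natDegree_eq_and_coeff_mem_pow_and_aeval_eq_zero R
      (algebraMap R (Module.End R M) r) I (by rintro _ ⟨m, rfl⟩; exact h m)
  have heval : p.eval r = 0 := by
    refine eq_of_smul_eq_smul (α := M) fun m ↦ ?_
    rw [Polynomial.aeval_algebraMap_apply_eq_algebraMap_eval] at hp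
    exact (LinearMap.congr_fun hp m).trans (zero_smul R m).symm
  rw [Polynomial.eval_eq_sum_range, Finset.sum_range_succ, hmonic.coeff_natDegree, one_mul, hdeg]
    at heval
  rw [eq_neg_of_add_eq_zero_right heval]
  refine I.neg_mem (I.sum_mem fun k hk ↦ I.mul_mem_right _ ?_)
  exact Ideal.pow_le_self (Nat.sub_ne_zero_of_lt (hdeg ▸ Finset.mem_range.1 hk)) (hcoeff k)

lemma isFiniteLength_of_smul_eq_zero [IsNoetherianRing R] [Ring.KrullDimLE 1 R] {M : Type*}
    [AddCommGroup M] [Module R M] [Module.Finite R M] {x : R} (hx : x ∈ R⁰)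
    (h : ∀ m : M, x • m = 0) : IsFiniteLength R M := by
  have htors : Module.IsTorsionBySet R M (Ideal.span {x} : Ideal R) := fun m ⟨a, ha⟩ ↦ by
    obtain ⟨b, rfl⟩ := Ideal.mem_span_singleton'.1 ha
    exact (mul_smul b x m).trans (by rw [h, smul_zero])
  let := htors.module
  have := htors.isScalarTower (S := R)
  have hart := (isFiniteLength_iff_isNoetherian_isArtinian.1
    (isFiniteLength_quotient_span_singleton R hx)).2
  have : IsArtinianRing (R ⧸ Ideal.span {x}) := isArtinian_of_tower R hart
  have : Module.Finite (R ⧸ Ideal.span {x}) M := .of_restrictScalars_finite R _ M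
  have : IsFiniteLength (R ⧸ Ideal.span {x}) M :=
    isFiniteLength_iff_isNoetherian_isArtinian.2 ⟨inferInstance, inferInstance⟩
  rw [← Module.length_ne_top_iff] at this ⊢
  rwa [Module.length_eq_of_surjective (Ideal.Quotient.mk_surjective (I := Ideal.span {x}))]

variable {K : Type*} [CommRing K] [Algebra R K] [IsFractionRing R K]

lemma length_quotient_lsmul_eq [IsNoetherianRing R] [Ring.KrullDimLE 1 R] {N : Submodule R K}
    (hN : N.FG) (h1 : 1 ∈ N) {x : R} (hx : x ∈ R⁰) :
    Module.length R (N ⧸ (LinearMap.lsmul R N x).range) =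
      Module.length R (R ⧸ Ideal.span {x}) := by
  have : Module.Finite R N := Module.Finite.iff_fg.2 hN
  let f : R →ₗ[R] N := LinearMap.toSpanSingleton R N ⟨1, h1⟩
  have hfK (r : R) : (f r : K) = algebraMap R K r := (Algebra.algebraMap_eq_smul_one r).symm
  have hf : Function.Injective f := fun a b hab ↦ IsFractionRing.injective R K <| by
    rw [← hfK, hab, hfK]
  have hM : IsFiniteLength R (N ⧸ f.range) := by
    obtain ⟨b, hb, hbN⟩ := FractionalIdeal.isFractional_of_fg (S := R⁰) hN
    refine isFiniteLength_of_smul_eq_zero hb fun q ↦ ?_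
    obtain ⟨y, rfl⟩ := Submodule.mkQ_surjective _ q
    rw [← map_smul, Submodule.mkQ_apply, Submodule.Quotient.mk_eq_zero]
    obtain ⟨a, ha⟩ := hbN y y.2
    exact ⟨a, Subtype.ext ((hfK a).trans ha)⟩
  have hφ : Function.Injective (LinearMap.lsmul R N x) := fun a b hab ↦ Subtype.ext <|
    (IsLocalization.map_units K (⟨x, hx⟩ : R⁰)).mul_left_cancel <| by
      simpa only [← Algebra.smul_def] using! congrArg Subtype.val hab
  rw [Ideal.span, ← LinearMap.range_toSpanSingleton]
  exact length_quotient_range_eq_of_comp_eq hf hM hφ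
    (LinearMap.ext_ring (by simp [f]))

lemma pow_mem_of_algebraMap_eq_mul [IsLocalRing R] [IsNoetherianRing R] [Ring.KrullDimLE 1 R]
    {x : R} (hxm : x ∈ maximalIdeal R) (hx : x ∈ R⁰) {e : ℕ}
    (he : Module.length R (R ⧸ Ideal.span {x}) ≤ e) {r y : R} {s : K} (hs : IsIntegral R s)
    (hr : algebraMap R K r = algebraMap R K y * s) : r ^ e ∈ Ideal.span {y} := by
  let N : Submodule R K := Subalgebra.toSubmodule (Algebra.adjoin R {s})
  have hN : N.FG := hs.fg_adjoin_singleton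
  have h1 : 1 ∈ N := one_mem (Algebra.adjoin R {s})
  have : Module.Finite R N := Module.Finite.iff_fg.2 hN
  have : FaithfulSMul R N := ⟨fun {a b} hab ↦ IsFractionRing.injective R K <| by
    simpa only [Algebra.algebraMap_eq_smul_one] using! congrArg Subtype.val (hab ⟨1, h1⟩)⟩
  have hμ : (⊤ : Submodule R N).spanFinrank ≤ e := by
    have hQ : (LinearMap.lsmul R N x).range ≤ maximalIdeal R • ⊤ := by
      rintro _ ⟨n, rfl⟩
      exact Submodule.smul_mem_smul hxm trivial
    exact_mod_cast ((spanFinrank_top_le_length_quotient hN hQ).trans_eq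
      (length_quotient_lsmul_eq hN h1 hx)).trans he
  refine Ideal.pow_mem_of_pow_mem _ (pow_spanFinrank_mem (M := N) fun n ↦ ?_) hμ
  have hsn : s * n ∈ N :=
    (Algebra.adjoin R {s}).mul_mem (Algebra.self_mem_adjoin_singleton R s) n.2
  have hrn : r • n = y • (⟨s * n, hsn⟩ : N) := Subtype.ext <| by
    change r • (n : K) = y • (s * n)
    rw [Algebra.smul_def, Algebra.smul_def, hr, mul_assoc]
  rw [hrn]
  exact Submodule.smul_mem_smul (Ideal.mem_span_singleton_self y) trivial

end UniformBound

section Chevalley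

universe u

variable {R : Type u} [CommRing R] {𝔞 : Ideal R}

lemma exists_iInf_sup_eq {J : ℕ → Ideal R} (hJ : Antitone J) {𝔟 : Ideal R}
    [IsArtinian R (R ⧸ 𝔟)] : ∃ ν, ⨅ n, J n ⊔ 𝔟 = J ν ⊔ 𝔟 := by
  obtain ⟨ν, hν⟩ := IsArtinian.monotone_stabilizes
    ⟨fun n ↦ OrderDual.toDual (Submodule.map 𝔟.mkQ (J n)), fun _ _ h ↦ Submodule.map_mono (hJ h)⟩
  refine ⟨ν, le_antisymm (iInf_le _ ν) (le_iInf fun n ↦ ?_)⟩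
  obtain hn | hn := le_total n ν
  · exact sup_le_sup_right (hJ hn) 𝔟
  · have heq := congrArg (Submodule.comap 𝔟.mkQ) (OrderDual.toDual.injective (hν n hn))
    simp only [Submodule.comap_map_mkQ, sup_comm 𝔟] at heq
    exact heq.le

-- The ideals `L j = ⨅ n, J n + 𝔞 ^ j` satisfy `L j ≤ L (j + 1) + 𝔞 ^ j`, so that an element of
-- `L j` can be corrected to one of `L (j + 1)`.
lemma exists_seq_of_forall_not_le (h𝔞 : ∀ j, IsArtinian R (R ⧸ 𝔞 ^ j)) {J : ℕ → Ideal R}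
    (hJ : Antitone J) (hle : ∀ n, ¬ J n ≤ 𝔞) : ∃ r : ℕ → R,
      (∀ j, r j ∈ J j ⊔ 𝔞 ^ j) ∧ (∀ j, r j - r (j + 1) ∈ 𝔞 ^ j) ∧ ∀ j, r (j + 1) ∉ 𝔞 := by
  let L (j : ℕ) : Ideal R := ⨅ n, J n ⊔ 𝔞 ^ j
  have hL (j : ℕ) : ∃ ν, L j = J ν ⊔ 𝔞 ^ j := exists_iInf_sup_eq hJ
  have hstep (j : ℕ) (a : L (j + 1)) : ∃ b : L (j + 2), (a : R) - b ∈ 𝔞 ^ (j + 1) := by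
    obtain ⟨ν, hν⟩ := hL (j + 2)
    obtain ⟨b, hb, c, hc, habc⟩ := Submodule.mem_sup.1 ((Submodule.mem_iInf _).1 a.2 ν)
    exact ⟨⟨b, hν ▸ Ideal.mem_sup_left hb⟩, by rwa [← habc, add_sub_cancel_left]⟩
  choose next hnext using hstep
  obtain ⟨ν, hν⟩ := hL 1
  obtain ⟨a, haJ, ha⟩ := SetLike.not_le_iff_exists.1 (hle ν)
  let s (j : ℕ) : L (j + 1) := Nat.rec ⟨a, hν ▸ Ideal.mem_sup_left haJ⟩ next j
  have hs (j : ℕ) : (s j).1 - (s (j + 1)).1 ∈ 𝔞 ^ (j + 1) := hnext j (s j)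
  refine ⟨fun j ↦ j.casesOn 0 fun j ↦ (s j).1, fun j ↦ ?_, fun j ↦ ?_, fun j ↦ ?_⟩
  · cases j with
    | zero => exact zero_mem _
    | succ j => exact (Submodule.mem_iInf _).1 (s j).2 (j + 1)
  · cases j with
    | zero => simp only [pow_zero, Ideal.one_eq_top, Submodule.mem_top]
    | succ j => exact hs j
  · induction j with
    | zero => exact ha
    | succ j ih =>
      exact fun h ↦ ih ((Submodule.sub_mem_iff_left _ h).1
        (Ideal.pow_le_self j.succ_ne_zero (hs j)))

lemma mem_pow_of_isReduced_adicCompletion [IsReduced (AdicCompletion 𝔞 R)] {r : ℕ → R}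
    (hr : ∀ j, r j - r (j + 1) ∈ 𝔞 ^ j) {e : ℕ} (he : ∀ j, r j ^ e ∈ 𝔞 ^ j) (j : ℕ) :
    r j ∈ 𝔞 ^ j := by
  let c := AdicCompletion.mk 𝔞 R <| .mk 𝔞 R r fun j ↦ by
    rw [SModEq.sub_mem, smul_eq_mul, Ideal.mul_top]
    exact hr j
  have hc (n : ℕ) : AdicCompletion.evalₐ 𝔞 n c = Ideal.Quotient.mk _ (r n) :=
    AdicCompletion.evalₐ_mk _ n _
  have hce : c ^ e = 0 := AdicCompletion.ext_evalₐ fun n ↦ by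
    rw [map_pow, hc, map_zero, ← map_pow, Ideal.Quotient.eq_zero_iff_mem]
    exact he n
  rw [← Ideal.Quotient.eq_zero_iff_mem, ← hc, eq_zero_of_pow_eq_zero hce, map_zero]

end Chevalley

section Finiteness

open nonZeroDivisors

universe u

variable {R : Type u} [CommRing R] (K : Type*) [CommRing K] [Algebra R K]

/-- The contraction to `R` of `y R̄`, where `R̄` is the integral closure of `R` in `K`; for regular
`y` and `K` the total ring of fractions, this is the integral closure of the ideal `(y)`. -/
def principalIntegralClosure (y : R) : Ideal R :=
  ((Subalgebra.toSubmodule (integralClosure R K)).map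
    (LinearMap.mulLeft R (algebraMap R K y))).comap (Algebra.linearMap R K)

variable {K}

lemma mem_principalIntegralClosure {y r : R} : r ∈ principalIntegralClosure K y ↔
    ∃ s : K, IsIntegral R s ∧ algebraMap R K r = algebraMap R K y * s :=
  exists_congr fun _ ↦ and_congr_right' eq_comm

lemma principalIntegralClosure_le_of_dvd {y z : R} (h : y ∣ z) :
    principalIntegralClosure K z ≤ principalIntegralClosure K y := by
  obtain ⟨t, rfl⟩ := h
  intro r hr
  obtain ⟨s, hs, hrs⟩ := mem_principalIntegralClosure.1 hr
  exact mem_principalIntegralClosure.2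
    ⟨algebraMap R K t * s, isIntegral_algebraMap.mul hs, by rw [hrs, map_mul, mul_assoc]⟩

variable [IsNoetherianRing R] [IsFractionRing R K]

lemma finite_of_mul_mem_range_algebraMap {N : Submodule R K} {y : R} (hy : y ∈ R⁰)
    (h : ∀ a ∈ N, algebraMap R K y * a ∈ (algebraMap R K).range) : Module.Finite R N := by
  have hinj : Function.Injective (LinearMap.mulLeft R (algebraMap R K y) ∘ₗ N.subtype) :=
    fun _ _ hab ↦ Subtype.ext ((IsLocalization.map_units K (⟨y, hy⟩ : R⁰)).mul_left_cancel hab)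
  exact .of_injective ((LinearMap.mulLeft R (algebraMap R K y) ∘ₗ N.subtype).codRestrict
    (Algebra.linearMap R K).range fun a ↦ h a a.2)
    fun _ _ hab ↦ hinj (congrArg Subtype.val hab)

variable [IsLocalRing R] [Ring.KrullDimLE 1 R] {x : R}

variable (K) in
lemma exists_principalIntegralClosure_pow_le [IsReduced (AdicCompletion (maximalIdeal R) R)]
    (hxm : x ∈ maximalIdeal R) (hx : x ∈ R⁰) :
    ∃ n : ℕ, principalIntegralClosure K (x ^ n) ≤ Ideal.span {x} := by
  by_contra! hle
  have hpow (j : ℕ) : Ideal.span {x} ^ j ≤ maximalIdeal R ^ j :=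
    Ideal.pow_right_mono ((Ideal.span_singleton_le_iff_mem _).2 hxm) j
  have hart (j : ℕ) : IsArtinian R (R ⧸ Ideal.span {x} ^ j) := by
    rw [Ideal.span_singleton_pow]
    exact (isFiniteLength_iff_isNoetherian_isArtinian.1
      (isFiniteLength_quotient_span_singleton R (pow_mem hx j))).2
  obtain ⟨r, hr, hcauchy, hrx⟩ := exists_seq_of_forall_not_le hart
    (fun _ _ h ↦ principalIntegralClosure_le_of_dvd (pow_dvd_pow x h)) hle
  obtain ⟨e, he⟩ := ENat.ne_top_iff_exists.1
    (Module.length_ne_top_iff.2 (isFiniteLength_quotient_span_singleton R hx))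
  have hre (j : ℕ) : r j ^ e ∈ maximalIdeal R ^ j := by
    obtain ⟨a, ha, b, hb, hab⟩ := Submodule.mem_sup.1 (hr j)
    obtain ⟨s, hs, has⟩ := mem_principalIntegralClosure.1 ha
    have hae := pow_mem_of_algebraMap_eq_mul hxm hx he.ge hs has
    rw [← Ideal.span_singleton_pow, ← Ideal.Quotient.eq_zero_iff_mem] at hae
    rw [← Ideal.Quotient.eq_zero_iff_mem] at hb
    apply hpow j
    rw [← Ideal.Quotient.eq_zero_iff_mem, ← hab, map_pow, map_add, hb, add_zero, ← map_pow, hae]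
  obtain ⟨N, hN⟩ := exists_maximalIdeal_pow_le_span_singleton hx
  exact hrx N (hN (Ideal.pow_le_pow_right N.le_succ
    (mem_pow_of_isReduced_adicCompletion (fun j ↦ hpow j (hcauchy j)) hre (N + 1))))

lemma exists_pow_mul_mem_range_algebraMap (hxm : x ∈ maximalIdeal R) (a : K) :
    ∃ k : ℕ, algebraMap R K (x ^ k) * a ∈ (algebraMap R K).range := by
  obtain ⟨⟨b, c⟩, hbc⟩ := IsLocalization.surj R⁰ a
  obtain ⟨k, hk⟩ := exists_maximalIdeal_pow_le_span_singleton c.2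
  obtain ⟨t, ht⟩ := Ideal.mem_span_singleton'.1 (hk (Ideal.pow_mem_pow hxm k))
  exact ⟨k, t * b, by rw [← ht, map_mul, map_mul, ← hbc, mul_comm a, mul_assoc]⟩

variable (K) in
theorem exists_pow_mul_mem_range_algebraMap_of_isIntegral
    [IsReduced (AdicCompletion (maximalIdeal R) R)] (hxm : x ∈ maximalIdeal R) (hx : x ∈ R⁰) :
    ∃ n : ℕ, ∀ a : K, IsIntegral R a → algebraMap R K (x ^ n) * a ∈ (algebraMap R K).range := by
  obtain ⟨n, hn⟩ := exists_principalIntegralClosure_pow_le K hxm hx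
  refine ⟨n, fun a ha ↦ ?_⟩
  have hdescend (k : ℕ) (h : algebraMap R K (x ^ (n + k)) * a ∈ (algebraMap R K).range) :
      algebraMap R K (x ^ n) * a ∈ (algebraMap R K).range := by
    induction k with
    | zero => exact h
    | succ k ih =>
      obtain ⟨r, hr⟩ := h
      have hrn : r ∈ principalIntegralClosure K (x ^ n) :=
        principalIntegralClosure_le_of_dvd (pow_dvd_pow x (Nat.le_add_right n (k + 1)))
          (mem_principalIntegralClosure.2 ⟨a, ha, hr⟩)
      obtain ⟨t, rfl⟩ := Ideal.mem_span_singleton.1 (hn hrn)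
      refine ih ⟨t, (IsLocalization.map_units K (⟨x, hx⟩ : R⁰)).mul_left_cancel ?_⟩
      rw [← map_mul, hr, ← mul_assoc, ← map_mul, ← pow_succ', add_assoc]
  obtain ⟨k, r, hr⟩ := exists_pow_mul_mem_range_algebraMap (K := K) hxm a
  exact hdescend k ⟨x ^ n * r, by rw [map_mul, hr, pow_add, map_mul, mul_assoc]⟩

end Finiteness

section Invertible

lemma exists_notMem_forall_mul_mem_of_isArtinianRing {A : Type*} [CommRing A] {I J : Ideal A}
    [IsArtinianRing (A ⧸ I)] (hIJ : I ≤ J) (hJ : J ≠ ⊤) : ∃ b ∉ I, ∀ j ∈ J, b * j ∈ I := by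
  have hdisj : Disjoint (J.map (Ideal.Quotient.mk I) : Set (A ⧸ I)) (nonZeroDivisors (A ⧸ I)) := by
    refine Set.disjoint_left.2 fun a ha hreg ↦ hJ ?_
    have htop := Ideal.eq_top_of_isUnit_mem _ ha (IsArtinianRing.isUnit_of_mem_nonZeroDivisors hreg)
    rw [← sup_eq_right.2 hIJ, ← Ideal.comap_map_quotientMk, htop, Ideal.comap_top]
  obtain ⟨b, hb, hb0⟩ :=
    SetLike.exists_of_lt (Ideal.bot_lt_annihilator_of_disjoint_nonZeroDivisors hdisj)
  obtain ⟨b, rfl⟩ := Ideal.Quotient.mk_surjective b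
  refine ⟨b, fun h ↦ hb0 (Ideal.Quotient.eq_zero_iff_mem.2 h), fun j hj ↦ ?_⟩
  rw [← Ideal.Quotient.eq_zero_iff_mem, map_mul]
  exact congrArg Subtype.val (Module.mem_annihilator.1 hb ⟨_, Ideal.mem_map_of_mem _ hj⟩)

variable {A K : Type*} [CommRing A] [IsNoetherianRing A] [CommRing K] [Algebra A K]

lemma isIntegral_of_forall_mul_mem {N : Submodule A K} (hN : N.FG) (h1 : 1 ∈ N) {s : K}
    (hs : ∀ a ∈ N, s * a ∈ N) : IsIntegral A s := by
  have hpow (n : ℕ) : s ^ n ∈ N := by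
    induction n with
    | zero => rwa [pow_zero]
    | succ n ih => exact pow_succ' s n ▸ hs _ ih
  have hle : Subalgebra.toSubmodule (Algebra.adjoin A {s}) ≤ N := by
    rw [Algebra.adjoin_eq_span, Submodule.span_le, ← Submonoid.powers_eq_closure]
    rintro _ ⟨n, rfl⟩
    exact hpow n
  have := isNoetherian_of_fg_of_noetherian N hN
  exact .of_mem_of_fg _ (.of_le_of_isNoetherian hle) s (Algebra.self_mem_adjoin_singleton A s)

lemma fg_one_div_of_isUnit_mem {J : Submodule A K} {u : K} (hu : IsUnit u) (huJ : u ∈ J) :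
    (1 / J).FG := by
  have hle : 1 / J ≤ (1 : Submodule A K).map (LinearMap.mulLeft A (↑hu.unit⁻¹ : K)) := fun t ht ↦
    ⟨t * u, Submodule.mem_div_iff_forall_mul_mem.1 ht u huJ, by
      rw [LinearMap.mulLeft_apply, mul_left_comm, hu.val_inv_mul, mul_one]⟩
  have : IsNoetherian A (1 : Submodule A K) :=
    isNoetherian_of_fg_of_noetherian _ (Submodule.fg_unit 1)
  exact .of_le_of_isNoetherian hle

lemma mul_one_div_eq_one_of_isArtinianRing [IsIntegrallyClosedIn A K] {J : Submodule A K}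
    (hJ : J ≤ 1) {x : A} [IsArtinianRing (A ⧸ Ideal.span {x})] (hx : IsUnit (algebraMap A K x))
    (hxJ : algebraMap A K x ∈ J) : J * (1 / J) = 1 := by
  have hone : (1 : K) ∈ 1 / J := Submodule.one_mem_div.2 hJ
  refine le_antisymm Submodule.mul_one_div_le_one (Submodule.one_le.2 ?_)
  by_contra hnot
  let C : Ideal A := (J * (1 / J)).comap (Algebra.linearMap A K)
  have hxC : Ideal.span {x} ≤ C := (Ideal.span_singleton_le_iff_mem _).2 <|
    Submodule.mem_comap.2 (mul_one (algebraMap A K x) ▸ Submodule.mul_mem_mul hxJ hone)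
  have hCtop : C ≠ ⊤ := fun h ↦ hnot <| by
    simpa [C] using Submodule.mem_comap.1 ((Ideal.eq_top_iff_one C).1 h)
  obtain ⟨b, hbx, hbC⟩ := exists_notMem_forall_mul_mem_of_isArtinianRing hxC hCtop
  obtain ⟨s, hs⟩ : ∃ s, algebraMap A K b = algebraMap A K x * s := hx.dvd
  have hsone : ∀ t ∈ J * (1 / J), s * t ∈ (1 : Submodule A K) := fun t ht ↦ by
    obtain ⟨c, rfl⟩ := Submodule.mem_one.1 (Submodule.mul_one_div_le_one ht)
    obtain ⟨d, hd⟩ := Ideal.mem_span_singleton.1 (hbC c ht)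
    refine Submodule.mem_one.2 ⟨d, hx.mul_left_cancel ?_⟩
    rw [← map_mul, ← hd, map_mul, hs, mul_assoc]
  have hsdiv : ∀ t ∈ 1 / J, s * t ∈ 1 / J := fun t ht ↦
    Submodule.mem_div_iff_forall_mul_mem.2 fun j hj ↦ by
      rw [mul_assoc, mul_comm t]
      exact hsone _ (Submodule.mul_mem_mul hj ht)
  obtain ⟨a, rfl⟩ := IsIntegrallyClosedIn.isIntegral_iff.1 <|
    isIntegral_of_forall_mul_mem (fg_one_div_of_isUnit_mem hx hxJ) hone hsdiv
  refine hbx (Ideal.mem_span_singleton.2 ⟨a, ?_⟩)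
  exact IsIntegralClosure.algebraMap_injective A A K (by rw [hs, map_mul])

lemma nonempty_linearEquiv_of_isArtinianRing [IsIntegrallyClosedIn A K]
    [Finite (MaximalSpectrum A)] {J : Submodule A K} (hJ : J ≤ 1) {x : A}
    [IsArtinianRing (A ⧸ Ideal.span {x})] (hx : IsUnit (algebraMap A K x))
    (hxJ : algebraMap A K x ∈ J) : Nonempty (J ≃ₗ[A] A) := by
  have : FaithfulSMul A K := (faithfulSMul_iff_algebraMap_injective A K).2
    (IsIntegralClosure.algebraMap_injective A A K)
  have : Module.Invertible A J := inferInstanceAs <| Module.Invertible A <|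
    (Units.mkOfMulEqOne J (1 / J) (mul_one_div_eq_one_of_isArtinianRing hJ hx hxJ)).1
  exact Module.Invertible.free_iff_linearEquiv.1
    (CommRing.Pic.mk_eq_one_iff_free.1 (Subsingleton.elim _ _))

end Invertible

section StableIdeal

open nonZeroDivisors

lemma finite_maximalSpectrum_of_finite (R A : Type*) [CommRing R] [IsLocalRing R] [CommRing A]
    [Algebra R A] [Module.Finite R A] : Finite (MaximalSpectrum A) := by
  have := (Algebra.QuasiFinite.finite_primesOver (S := A) (maximalIdeal R)).to_subtype
  refine .of_injective (β := (maximalIdeal R).primesOver A)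
    (fun P ↦ ⟨P.asIdeal, P.isMaximal.isPrime, ⟨?_⟩⟩)
    fun P Q h ↦ MaximalSpectrum.ext (congrArg Subtype.val h)
  exact (eq_maximalIdeal (Ideal.isMaximal_comap_of_isIntegral_of_isMaximal (R := R) P.asIdeal)).symm

universe u

variable {R : Type u} [CommRing R] [IsNoetherianRing R] [Ring.KrullDimLE 1 R]

lemma isArtinianRing_quotient_span_algebraMap (A : Type*) [CommRing A] [Algebra R A]
    [Module.Finite R A] {x : R} (hx : x ∈ R⁰) :
    IsArtinianRing (A ⧸ Ideal.span {algebraMap R A x}) := by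
  refine isArtinian_of_tower R (isFiniteLength_iff_isNoetherian_isArtinian.1
    (isFiniteLength_of_smul_eq_zero hx fun q ↦ ?_)).2
  obtain ⟨a, rfl⟩ := Ideal.Quotient.mk_surjective q
  rw [Algebra.smul_def]
  exact Ideal.Quotient.eq_zero_iff_mem.2 (Ideal.mul_mem_right a _ (Ideal.mem_span_singleton_self _))

lemma nonempty_linearEquiv_integralClosure [IsLocalRing R] {K : Type*} [CommRing K] [Algebra R K]
    [IsFractionRing R K] [Module.Finite R (integralClosure R K)] {I : Ideal R}
    (hI : ∀ a ∈ integralClosure R K, ∀ y ∈ I, ∃ z ∈ I, algebraMap R K z = a * algebraMap R K y)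
    {y : R} (hyI : y ∈ I) (hy : y ∈ R⁰) : Nonempty (I ≃ₗ[R] integralClosure R K) := by
  let J : Submodule (integralClosure R K) K :=
    { Submodule.map (Algebra.linearMap R K) I with
      smul_mem' := by
        rintro a _ ⟨z, hz, rfl⟩
        exact hI a a.2 z hz }
  have hJ : J ≤ 1 := by
    rintro _ ⟨z, -, rfl⟩
    exact Submodule.mem_one.2 ⟨algebraMap R _ z, rfl⟩
  have := finite_maximalSpectrum_of_finite R (integralClosure R K)
  have : IsNoetherianRing (integralClosure R K) := isNoetherian_of_tower R inferInstance
  have := isArtinianRing_quotient_span_algebraMap (integralClosure R K) hy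
  obtain ⟨e⟩ := nonempty_linearEquiv_of_isArtinianRing (x := algebraMap R _ y) hJ
    (IsLocalization.map_units K (⟨y, hy⟩ : R⁰)) ⟨y, hyI, rfl⟩
  exact ⟨(Submodule.equivMapOfInjective (Algebra.linearMap R K)
    (IsFractionRing.injective R K) I).trans (e.restrictScalars R)⟩

end StableIdeal

section Conductor

open nonZeroDivisors

section

variable {R : Type} [CommRing R]

lemma mem_conductorIdeal {r : R} : r ∈ conductorIdeal R ↔ ∀ a ∈ integralClosure R (FractionRing R),
    algebraMap R (FractionRing R) r * a ∈ (algebraMap R (FractionRing R)).range := by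
  rw [conductorIdeal, Module.mem_annihilator, (Submodule.mkQ_surjective _).forall, Subtype.forall]
  refine forall₂_congr fun a ha ↦ ?_
  rw [← map_smul, Submodule.mkQ_apply, Submodule.Quotient.mk_eq_zero, ← Algebra.smul_def]
  exact exists_congr fun t ↦ Subtype.ext_iff

lemma exists_mem_mul_conductorIdeal_algebraMap_eq (I : Ideal R) {a : FractionRing R}
    (ha : a ∈ integralClosure R (FractionRing R)) {y : R} (hy : y ∈ I * conductorIdeal R) :
    ∃ z ∈ I * conductorIdeal R,
      algebraMap R (FractionRing R) z = a * algebraMap R (FractionRing R) y := by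
  induction hy using Submodule.mul_induction_on' with
  | mem_mul_mem i hi c hc =>
    obtain ⟨t, ht⟩ := mem_conductorIdeal.1 hc a ha
    have htc : t ∈ conductorIdeal R := mem_conductorIdeal.2 fun b hb ↦ by
      rw [ht, mul_assoc]
      exact mem_conductorIdeal.1 hc _ (mul_mem ha hb)
    exact ⟨i * t, Ideal.mul_mem_mul hi htc, by rw [map_mul, ht, map_mul]; ring⟩
  | add y _ z _ hy hz =>
    obtain ⟨y', hy', hyy'⟩ := hy
    obtain ⟨z', hz', hzz'⟩ := hz
    exact ⟨y' + z', add_mem hy' hz', by rw [map_add, hyy', hzz', map_add, mul_add]⟩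

end

lemma isReduced_of_isReduced_adicCompletion (R : Type*) [CommRing R] [IsLocalRing R]
    [IsNoetherianRing R] [IsReduced (AdicCompletion (maximalIdeal R) R)] : IsReduced R :=
  isReduced_of_injective (algebraMap R (AdicCompletion (maximalIdeal R) R))
    (AdicCompletion.of_injective (maximalIdeal R) R)

variable {R : Type} [CommRing R] [IsLocalRing R] [IsNoetherianRing R] [Ring.KrullDimLE 1 R]
  {x y : R}

lemma exists_pow_mem_conductorIdeal [IsReduced (AdicCompletion (maximalIdeal R) R)]
    (hxm : x ∈ maximalIdeal R) (hx : x ∈ R⁰) : ∃ n : ℕ, x ^ n ∈ conductorIdeal R := by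
  obtain ⟨n, hn⟩ := exists_pow_mul_mem_range_algebraMap_of_isIntegral (FractionRing R) hxm hx
  exact ⟨n, mem_conductorIdeal.2 hn⟩

lemma nonempty_mul_conductorIdeal_linearEquiv_intClosure (hyc : y ∈ conductorIdeal R)
    (hy : y ∈ R⁰) {I : Ideal R} (hxI : x ∈ I) (hx : x ∈ R⁰) :
    Nonempty ((I * conductorIdeal R : Ideal R) ≃ₗ[R] IntClosure R) := by
  have : Module.Finite R (IntClosure R) :=
    finite_of_mul_mem_range_algebraMap (N := Subalgebra.toSubmodule (integralClosure R _)) hy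
      (mem_conductorIdeal.1 hyc)
  exact nonempty_linearEquiv_integralClosure
    (fun a ha y hy ↦ exists_mem_mul_conductorIdeal_algebraMap_eq I ha hy)
    (Ideal.mul_mem_mul hxI hyc) (mul_mem hx hy)

lemma extVanishes_conductorIdeal_iff (hyc : y ∈ conductorIdeal R) (hy : y ∈ R⁰)
    {N : Type} [AddCommGroup N] [Module R N] {i : ℕ} :
    ExtVanishes R (conductorIdeal R) N i ↔ ExtVanishes R (IntClosure R) N i := by
  obtain ⟨e⟩ := nonempty_mul_conductorIdeal_linearEquiv_intClosure hyc hy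
    (I := ⊤) (x := 1) trivial (one_mem _)
  exact extVanishes_congr ((LinearEquiv.ofEq _ _ (Ideal.top_mul _).symm).trans e)

lemma isGorensteinLocal_of_extVanishes_intClosure [IsReduced R] (hyc : y ∈ conductorIdeal R)
    (hy : y ∈ R⁰) (hxm : x ∈ maximalIdeal R) (hx : x ∈ R⁰) {i : ℕ}
    (h : ExtVanishes R (IntClosure R) R (i + 1)) : IsGorensteinLocal R := by
  refine ⟨inferInstance, hasFiniteInjDim_iff.2
    ⟨_, hasInjectiveDimensionLT_of_extVanishes hyc hy (i + 1) fun n ↦ ?_⟩⟩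
  obtain ⟨e⟩ := nonempty_mul_conductorIdeal_linearEquiv_intClosure hyc hy
    (Ideal.pow_mem_pow hxm n) (pow_mem hx n)
  exact (extVanishes_ideal_iff _).1 ((extVanishes_congr e).2 h)

lemma extVanishes_intClosure_of_isGorensteinLocal (hyc : y ∈ conductorIdeal R)
    (hy : y ∈ R⁰) (hxm : x ∈ maximalIdeal R) (hx : x ∈ R⁰)
    (hR : IsGorensteinLocal R) (i : ℕ) : ExtVanishes R (IntClosure R) R (i + 1) := by
  obtain ⟨n, hn⟩ := hasFiniteInjDim_iff.1 hR.2
  exact (extVanishes_conductorIdeal_iff hyc hy).1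
    (extVanishes_ideal_of_hasInjectiveDimensionLT hxm hx hn hyc hy i)

end Conductor

-- STATEMENT 9
theorem stmt9 (R : Type) [CommRing R] [IsLocalRing R] [IsNoetherianRing R]
    (hau : AnalyticallyUnramified R) (hdim : ringKrullDim R = 1) :
    [∃ i : ℕ, 0 < i ∧ Subsingleton (ExtMod R ↥(conductorIdeal R) R i),
     IsGorensteinLocal R,
     ∀ i : ℕ, 0 < i → Subsingleton (ExtMod R (IntClosure R) R i),
     ∃ i : ℕ, 0 < i ∧ Subsingleton (ExtMod R (IntClosure R) R i)].TFAE := by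
  have : IsReduced (AdicCompletion (maximalIdeal R) R) := hau
  have := isReduced_of_isReduced_adicCompletion R
  have : Ring.KrullDimLE 1 R := Ring.krullDimLE_iff.2 (by simp [hdim])
  obtain ⟨x, hxm, hx⟩ := exists_mem_maximalIdeal_mem_nonZeroDivisors (R := R)
    fun h ↦ by simp [ringKrullDim_eq_zero_of_isField h] at hdim
  obtain ⟨n, hxc⟩ := exists_pow_mem_conductorIdeal hxm hx
  have hxn := pow_mem hx n
  tfae_have 1 ↔ 4 := exists_congr fun i ↦ and_congr_right fun hi ↦ by
    rw [subsingleton_extMod_iff hi, subsingleton_extMod_iff hi,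
      extVanishes_conductorIdeal_iff hxc hxn]
  tfae_have 4 → 2 := by
    rintro ⟨i, hi, h⟩
    obtain ⟨i, rfl⟩ := Nat.exists_eq_add_one.2 hi
    exact isGorensteinLocal_of_extVanishes_intClosure hxc hxn hxm hx
      ((subsingleton_extMod_iff hi).1 h)
  tfae_have 2 → 3 := fun hR i hi ↦ by
    obtain ⟨i, rfl⟩ := Nat.exists_eq_add_one.2 hi
    exact (subsingleton_extMod_iff hi).2
      (extVanishes_intClosure_of_isGorensteinLocal hxc hxn hxm hx hR i)
  tfae_have 3 → 4 := fun h ↦ ⟨1, one_pos, h 1 one_pos⟩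
  tfae_finish
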